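/- arXiv:2506.20909 — 2 statements merged into one kernel-verified Lean document; each statement's English description precedes it below -/
import Mathlib

section
/- Let b and ℬ be powers of 2 with b ≤ ℬ and ℬ ≥ 2, and let n₁ < n₂ < … < n_ν be strictly increasing positive integers. Let M := Σ_{i=0}^{n_ν} m_i ℬ^i, where m_i = ℬ − b if i = n_j for some j ∈ {1, …, ν}, and m_i = ℬ − 1 otherwise. Then for every integer g ≥ 0, the following are equivalent: (i) g < ℬ^{n_ν + 1} and τ(g, M) = 0; (ii) there exist z₁, …, z_ν ∈ [0, b) such that g = Σ_{i=1}^ν z_i ℬ^{n_i}. -/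
/-- `σ(a)`: the sum of the binary digits of `a`. -/
def binDigitSum (a : ℕ) : ℕ := (Nat.digits 2 a).sum

/-- `τ(a, b) = σ(a) + σ(b) − σ(a+b)`: the number of carries in the base-2
addition of `a` and `b`. -/
def carries (a b : ℕ) : ℤ :=
  (binDigitSum a : ℤ) + (binDigitSum b : ℤ) - (binDigitSum (a + b) : ℤ)

/-!
By Kummer's theorem `τ(a, b)` is the 2-adic valuation of a binomial coefficient, so it is
nonnegative. Stripping the last binary digits of `a` and `b` does not change it, unless both are 1;
in that case `τ(a, b)` exceeds a sum of two nonnegative carry counts by 1. So `τ(a, b) = 0` means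
that the bitwise conjunction of `a` and `b` vanishes. As the base `B = 2 ^ K` is a power of 2, this
conjunction can be computed separately on each base-`B` digit. A digit `d < 2 ^ K` is disjoint from
`2 ^ K - 2 ^ k`, whose ones occupy the positions `k, …, K - 1`, exactly when `d < 2 ^ k`; so the
mask digit `B - b` lets the digits below `b` through, and `B - 1` lets only 0 through.
-/

section Carries

theorem binDigitSum_eq_mod_add_div (a : ℕ) : binDigitSum a = a % 2 + binDigitSum (a / 2) := by
  rcases a.eq_zero_or_pos with rfl | ha
  · rfl
  · simp only [binDigitSum, Nat.digits_def' one_lt_two ha, List.sum_cons]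

theorem binDigitSum_add_padicValNat_factorial (a : ℕ) :
    binDigitSum a + padicValNat 2 a.factorial = a := by
  have legendre := sub_one_mul_padicValNat_factorial (p := 2) a
  have digitSum_le : binDigitSum a ≤ a := Nat.digit_sum_le 2 a
  unfold binDigitSum at digitSum_le ⊢
  omega

theorem carries_eq_padicValNat_choose (a b : ℕ) :
    carries a b = padicValNat 2 ((a + b).choose b) := by
  have choose_ne_zero : (a + b).choose b ≠ 0 := (Nat.choose_pos (b.le_add_left a)).ne'
  have valuation : padicValNat 2 (a + b).factorial =
      padicValNat 2 ((a + b).choose b) + padicValNat 2 a.factorial +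
        padicValNat 2 b.factorial := by
    rw [← Nat.add_choose_mul_factorial_mul_factorial a b,
      padicValNat.mul (mul_ne_zero choose_ne_zero a.factorial_ne_zero) b.factorial_ne_zero,
      padicValNat.mul choose_ne_zero a.factorial_ne_zero]
  have ha := binDigitSum_add_padicValNat_factorial a
  have hb := binDigitSum_add_padicValNat_factorial b
  have hab := binDigitSum_add_padicValNat_factorial (a + b)
  unfold carries
  omega

theorem carries_nonneg (a b : ℕ) : 0 ≤ carries a b :=
  carries_eq_padicValNat_choose a b ▸ Int.natCast_nonneg _

theorem carries_of_not_both_odd {a b : ℕ} (h : ¬(a % 2 = 1 ∧ b % 2 = 1)) :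
    carries a b = carries (a / 2) (b / 2) := by
  have half_add : (a + b) / 2 = a / 2 + b / 2 := by omega
  simp only [carries, binDigitSum_eq_mod_add_div a, binDigitSum_eq_mod_add_div b,
    binDigitSum_eq_mod_add_div (a + b), half_add]
  omega

theorem carries_of_both_odd {a b : ℕ} (ha : a % 2 = 1) (hb : b % 2 = 1) :
    carries a b = carries (a / 2) (b / 2) + carries (a / 2 + b / 2) 1 + 1 := by
  have half_add : (a + b) / 2 = a / 2 + b / 2 + 1 := by omega
  have digitSum_one : binDigitSum 1 = 1 := by simp [binDigitSum]
  simp only [carries, binDigitSum_eq_mod_add_div a, binDigitSum_eq_mod_add_div b,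
    binDigitSum_eq_mod_add_div (a + b), half_add, digitSum_one]
  omega

theorem land_eq_zero_iff_mod_div (a b : ℕ) :
    a &&& b = 0 ↔ ¬(a % 2 = 1 ∧ b % 2 = 1) ∧ a / 2 &&& b / 2 = 0 := by
  rw [← Nat.and_mod_two_eq_one, ← Nat.and_div_two]
  omega

theorem carries_eq_zero_iff_land_eq_zero (a b : ℕ) : carries a b = 0 ↔ a &&& b = 0 := by
  induction a using Nat.strong_induction_on generalizing b with
  | _ a ih =>
    rcases a.eq_zero_or_pos with rfl | ha
    · simp [carries, binDigitSum]
    rw [land_eq_zero_iff_mod_div]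
    by_cases odd : a % 2 = 1 ∧ b % 2 = 1
    · have pos : carries a b ≠ 0 := by
        rw [carries_of_both_odd odd.1 odd.2]
        have := carries_nonneg (a / 2) (b / 2)
        have := carries_nonneg (a / 2 + b / 2) 1
        omega
      simp only [pos, odd, and_self, not_true_eq_false, false_and]
    · rw [carries_of_not_both_odd odd, ih (a / 2) (by omega)]
      simp only [odd, not_false_eq_true, true_and]

end Carries

section Digits

theorem lt_pow_iff_exists_digits {B N g : ℕ} :
    g < B ^ N ↔ ∃ z : ℕ → ℕ, (∀ i < N, z i < B) ∧ g = ∑ i ∈ Finset.range N, z i * B ^ i := by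
  constructor
  · intro hg
    obtain ⟨z, hz⟩ := finFunctionFinEquiv.surjective (⟨g, hg⟩ : Fin (B ^ N))
    refine ⟨fun i => if h : i < N then z ⟨i, h⟩ else 0, fun i hi => ?_, ?_⟩
    · simp only [hi, dif_pos, Fin.is_lt]
    · simpa [Finset.sum_range] using (congrArg Fin.val hz).symm
  · rintro ⟨z, hz, rfl⟩
    simpa [Finset.sum_range] using
      (finFunctionFinEquiv fun i : Fin N => (⟨z i, hz i i.isLt⟩ : Fin B)).isLt

theorem land_two_pow_mul_add {k x y : ℕ} (u v : ℕ) (hx : x < 2 ^ k) (hy : y < 2 ^ k) :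
    (2 ^ k * u + x) &&& (2 ^ k * v + y) = 2 ^ k * (u &&& v) + (x &&& y) := by
  refine Nat.eq_of_testBit_eq fun i => ?_
  simp only [Nat.testBit_and, Nat.testBit_two_pow_mul_add _ hx, Nat.testBit_two_pow_mul_add _ hy,
    Nat.testBit_two_pow_mul_add _ (Nat.and_lt_two_pow x hy)]
  split_ifs <;> rfl

theorem land_sum_mul_two_pow_pow {K N : ℕ} {x y : ℕ → ℕ}
    (hx : ∀ i < N, x i < 2 ^ K) (hy : ∀ i < N, y i < 2 ^ K) :
    (∑ i ∈ Finset.range N, x i * (2 ^ K) ^ i) &&& (∑ i ∈ Finset.range N, y i * (2 ^ K) ^ i) =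
      ∑ i ∈ Finset.range N, (x i &&& y i) * (2 ^ K) ^ i := by
  induction N with
  | zero => simp
  | succ N ih =>
    have hx' : ∀ i < N, x i < 2 ^ K := fun i hi => hx i (by omega)
    have hy' : ∀ i < N, y i < 2 ^ K := fun i hi => hy i (by omega)
    have lower_lt : ∀ {z : ℕ → ℕ}, (∀ i < N, z i < 2 ^ K) →
        ∑ i ∈ Finset.range N, z i * (2 ^ K) ^ i < 2 ^ (K * N) := fun hz =>
      pow_mul 2 K N ▸ lt_pow_iff_exists_digits.2 ⟨_, hz, rfl⟩
    have split_top := land_two_pow_mul_add (x N) (y N) (lower_lt hx') (lower_lt hy')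
    rw [ih hx' hy', pow_mul] at split_top
    simpa only [Finset.sum_range_succ, add_comm, mul_comm] using split_top

theorem land_two_pow_sub_two_pow {d k K : ℕ} (hk : k ≤ K) (hd : d < 2 ^ K) :
    d &&& (2 ^ K - 2 ^ k) = 2 ^ k * (d / 2 ^ k) := by
  have mask_eq : 2 ^ K - 2 ^ k = 2 ^ k * (2 ^ (K - k) - 1) + 0 := by
    rw [Nat.mul_sub, ← pow_add, Nat.add_sub_cancel' hk, mul_one, add_zero]
  have quotient_lt : d / 2 ^ k < 2 ^ (K - k) := by
    apply Nat.div_lt_of_lt_mul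
    rwa [← pow_add, Nat.add_sub_cancel' hk]
  calc d &&& (2 ^ K - 2 ^ k)
      = (2 ^ k * (d / 2 ^ k) + d % 2 ^ k) &&& (2 ^ k * (2 ^ (K - k) - 1) + 0) := by
        rw [Nat.div_add_mod, mask_eq]
    _ = 2 ^ k * (d / 2 ^ k &&& (2 ^ (K - k) - 1)) + (d % 2 ^ k &&& 0) :=
        land_two_pow_mul_add _ _ (Nat.mod_lt _ (by positivity)) (by positivity)
    _ = 2 ^ k * (d / 2 ^ k) := by
        rw [Nat.and_two_pow_sub_one_of_lt_two_pow quotient_lt, Nat.and_zero, add_zero]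

theorem land_two_pow_sub_two_pow_eq_zero_iff {d k K : ℕ} (hk : k ≤ K) (hd : d < 2 ^ K) :
    d &&& (2 ^ K - 2 ^ k) = 0 ↔ d < 2 ^ k := by
  simp [land_two_pow_sub_two_pow hk hd, Nat.div_eq_zero_iff]

theorem lt_pow_and_land_mask_eq_zero_iff {K N g : ℕ} {c : ℕ → ℕ} (hc : ∀ i < N, c i ≤ K) :
    (g < (2 ^ K) ^ N ∧ g &&& ∑ i ∈ Finset.range N, (2 ^ K - 2 ^ c i) * (2 ^ K) ^ i = 0) ↔
      ∃ z : ℕ → ℕ, (∀ i < N, z i < 2 ^ c i) ∧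
        g = ∑ i ∈ Finset.range N, z i * (2 ^ K) ^ i := by
  have mask_digit_lt : ∀ i < N, 2 ^ K - 2 ^ c i < 2 ^ K := fun i _ =>
    Nat.sub_lt (by positivity) (by positivity)
  have land_mask_iff : ∀ {z : ℕ → ℕ}, (∀ i < N, z i < 2 ^ K) →
      ((∑ i ∈ Finset.range N, z i * (2 ^ K) ^ i) &&&
        (∑ i ∈ Finset.range N, (2 ^ K - 2 ^ c i) * (2 ^ K) ^ i) = 0 ↔ ∀ i < N, z i < 2 ^ c i) := by
    intro z hz
    rw [land_sum_mul_two_pow_pow hz mask_digit_lt, Finset.sum_eq_zero_iff]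
    simp only [Finset.mem_range, mul_eq_zero, pow_eq_zero_iff', OfNat.ofNat_ne_zero, false_and,
      or_false]
    exact forall₂_congr fun i hi => land_two_pow_sub_two_pow_eq_zero_iff (hc i hi) (hz i hi)
  rw [lt_pow_iff_exists_digits]
  constructor
  · rintro ⟨⟨z, hz, rfl⟩, disjoint⟩
    exact ⟨z, (land_mask_iff hz).1 disjoint, rfl⟩
  · rintro ⟨z, hz, rfl⟩
    have hzK : ∀ i < N, z i < 2 ^ K := fun i hi =>
      (hz i hi).trans_le (Nat.pow_le_pow_right two_pos (hc i hi))
    exact ⟨⟨z, hzK, rfl⟩, (land_mask_iff hzK).2 hz⟩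

end Digits

section Positions

variable {ι : Type*} [Fintype ι] {n : ι → ℕ} {N : ℕ}

theorem sum_range_eq_sum_of_injective (hn : n.Injective) (hN : ∀ j, n j < N) {f : ℕ → ℕ}
    (hf : ∀ i < N, (¬∃ j, n j = i) → f i = 0) :
    ∑ i ∈ Finset.range N, f i = ∑ j, f (n j) := by
  refine (Finset.sum_of_injOn n hn.injOn (fun j _ => by simpa using hN j) ?_ fun _ _ => rfl).symm
  intro i hi not_mem
  exact hf i (Finset.mem_range.1 hi) (by simpa using not_mem)

theorem exists_digits_on_range_iff [DecidablePred fun i => ∃ j, n j = i] (hn : n.Injective)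
    (hN : ∀ j, n j < N) (b g : ℕ) (weight : ℕ → ℕ) :
    (∃ z : ℕ → ℕ, (∀ i < N, z i < if ∃ j, n j = i then b else 1) ∧
        g = ∑ i ∈ Finset.range N, z i * weight i) ↔
      ∃ z : ι → ℕ, (∀ j, z j < b) ∧ g = ∑ j, z j * weight (n j) := by
  constructor
  · rintro ⟨z, hz, rfl⟩
    refine ⟨z ∘ n, fun j => ?_, sum_range_eq_sum_of_injective hn hN fun i hi off => ?_⟩
    · simpa using hz (n j) (hN j)
    · have : z i = 0 := by simpa [off] using hz i hi
      rw [this, zero_mul]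
  · rintro ⟨z, hz, rfl⟩
    refine ⟨Function.extend n z 0, fun i _ => ?_, ?_⟩
    · split_ifs with mem
      · obtain ⟨j, rfl⟩ := mem
        simpa only [hn.extend_apply] using hz j
      · simp [Function.extend_apply' _ _ _ mem]
    · rw [sum_range_eq_sum_of_injective hn hN fun i _ off => by
        simp [Function.extend_apply' _ _ _ off]]
      simp only [hn.extend_apply]

end Positions

theorem masking_general {ι : Type*} [Fintype ι] {b B N : ℕ} (hb : ∃ k : ℕ, b = 2 ^ k)
    (hB : ∃ k : ℕ, B = 2 ^ k) (hbB : b ≤ B) {n : ι → ℕ} [DecidablePred fun i => ∃ j, n j = i]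
    (hn : n.Injective) (hN : ∀ j, n j < N) (g : ℕ) :
    (g < B ^ N ∧ carries g (∑ i ∈ Finset.range N,
        (if ∃ j, n j = i then B - b else B - 1) * B ^ i) = 0) ↔
      ∃ z : ι → ℕ, (∀ j, z j < b) ∧ g = ∑ j, z j * B ^ n j := by
  obtain ⟨k, rfl⟩ := hb
  obtain ⟨K, rfl⟩ := hB
  have hkK : k ≤ K := (Nat.pow_le_pow_iff_right one_lt_two).1 hbB
  let c : ℕ → ℕ := fun i => if ∃ j, n j = i then k else 0
  have two_pow_c : ∀ i, 2 ^ c i = if ∃ j, n j = i then 2 ^ k else 1 := fun i => by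
    simp only [c, apply_ite (2 ^ ·), pow_zero]
  have c_le : ∀ i < N, c i ≤ K := fun i _ => by
    dsimp only [c]
    split_ifs <;> omega
  rw [carries_eq_zero_iff_land_eq_zero, ← exists_digits_on_range_iff hn hN]
  simpa only [two_pow_c, apply_ite (2 ^ K - ·)] using lt_pow_and_land_mask_eq_zero_iff c_le

/-- **Masking.** Let `b, B` be powers of 2 with `b ≤ B`, `B ≥ 2`, and let
`n 0 < n 1 < … < n ν` be strictly increasing positive integers.  With the mask
`M := ∑_{i=0}^{n ν} m_i B^i` where `m_i = B − b` if `i = n j` for some `j` and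
`m_i = B − 1` otherwise, a number `g ≥ 0` satisfies `g < B^(n ν + 1)` and
`τ(g, M) = 0` if and only if `g = ∑ j, z j * B^(n j)` for some digits
`z j ∈ [0, b)`. -/
theorem masking (b B : ℕ) (hb : ∃ k : ℕ, b = 2 ^ k) (hB : ∃ k : ℕ, B = 2 ^ k)
    (hbB : b ≤ B) (hB2 : 2 ≤ B)
    (ν : ℕ) (n : Fin (ν + 1) → ℕ) (hmono : StrictMono n) (hpos : ∀ j, 0 < n j)
    (M : ℕ)
    (hM : M = ∑ i ∈ Finset.range (n (Fin.last ν) + 1),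
      (if ∃ j, n j = i then B - b else B - 1) * B ^ i)
    (g : ℕ) :
    (g < B ^ (n (Fin.last ν) + 1) ∧ carries g M = 0) ↔
      ∃ z : Fin (ν + 1) → ℕ, (∀ j, z j < b) ∧ g = ∑ j, z j * B ^ (n j) := by
  have position_lt : ∀ j, n j < n (Fin.last ν) + 1 := fun j =>
    Nat.lt_succ_of_le (hmono.monotone (Fin.le_last j))
  exact hM ▸ masking_general hb hB hbB hmono.injective position_lt g
end

section
/- Let A, n, k, r be integers with n, k, r ≥ 0. Then ψ_{nk+r}(A) = Σ_{i=0}^{n} C(n, i) · (ψ_{k+1}(A) − A·ψ_k(A))^{n−i} · ψ_k(A)^i · ψ_{r+i}(A). -/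
/-- The Lucas sequence `ψ_n(A)` for natural indices:
`ψ_0 = 0`, `ψ_1 = 1`, `ψ_{n+2} = A·ψ_{n+1} − ψ_n`. -/
def psiNat (A : ℤ) : ℕ → ℤ
  | 0 => 0
  | 1 => 1
  | n + 2 => A * psiNat A (n + 1) - psiNat A n

/-- The Lucas sequence `χ_n(A)` for natural indices:
`χ_0 = 2`, `χ_1 = A`, `χ_{n+2} = A·χ_{n+1} − χ_n`. -/
def chiNat (A : ℤ) : ℕ → ℤ
  | 0 => 2
  | 1 => A
  | n + 2 => A * chiNat A (n + 1) - chiNat A n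

/-- The Lucas sequence `ψ_n(A)` for `n ∈ ℤ`: the unique solution of
`x_{n+1} = A·x_n − x_{n−1}` with `ψ_0 = 0`, `ψ_1 = 1`
(for negative indices, `ψ_{−n} = −ψ_n`). -/
def psi (A : ℤ) : ℤ → ℤ
  | .ofNat n => psiNat A n
  | .negSucc n => -psiNat A (n + 1)

/-- The Lucas sequence `χ_n(A)` for `n ∈ ℤ`: the unique solution of
`x_{n+1} = A·x_n − x_{n−1}` with `χ_0 = 2`, `χ_1 = A`
(for negative indices, `χ_{−n} = χ_n`). -/
def chi (A : ℤ) : ℤ → ℤ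
  | .ofNat n => chiNat A n
  | .negSucc n => chiNat A (n + 1)

/-!
If `u` is a unit with `u + u⁻¹ = A`, then `u ^ k = ψ_k u + (ψ_{k+1} - A ψ_k)` for every integer `k`,
so the binomial theorem expands `u ^ (nk + r) = (u ^ k) ^ n u ^ r` as a combination of the powers
`u ^ (r + i)`. The universal such `u` is the generator `ω` of `ℤ[ω] / (ω² - Aω + 1)`. The
`ω`-coordinate of `ω ^ m` is `ψ_m`, so comparing `ω`-coordinates gives the expansion.
-/

open QuadraticAlgebra

theorem psi_add_one (A : ℤ) : ∀ m : ℤ, psi A (m + 1) = A * psi A m - psi A (m - 1)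
  | .ofNat 0 => by
    change 1 = A * 0 - -1
    ring
  | .ofNat (n + 1) => by
    rw [Int.ofNat_eq_natCast, Nat.cast_succ, add_sub_cancel_right]
    rfl
  | .negSucc 0 => by
    change 0 = A * -1 - -(A * 1 - 0)
    ring
  | .negSucc (n + 1) => by
    change -psiNat A (n + 1) = A * -psiNat A (n + 2) - -(A * psiNat A (n + 2) - psiNat A (n + 1))
    ring

section Units

variable {R : Type*} [Ring R] {A : ℤ} {u : Rˣ}

theorem units_zpow_eq_psi_smul_add (hu : (u + u⁻¹ : R) = A) (m : ℤ) :
    (u ^ m : Rˣ) = psi A m • (u : R) + (psi A (m + 1) - A * psi A m) • (1 : R) := by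
  have hinv : ((u⁻¹ : Rˣ) : R) = A • (1 : R) - u := by
    rw [zsmul_one, ← hu, add_sub_cancel_left]
  have hsq : (u * u : R) = A • (u : R) - 1 := by
    have h := u.mul_inv
    rw [hinv, mul_sub, mul_smul_comm, mul_one] at h
    rw [← h, sub_sub_cancel]
  induction m with
  | zero => simp [psi, psiNat]
  | succ m ih =>
    rw [zpow_add_one, Units.val_mul, ih, add_mul, smul_mul_assoc, smul_mul_assoc, hsq, one_mul,
      psi_add_one A (m + 1), add_sub_cancel_right]
    module
  | pred m ih =>
    rw [zpow_sub_one, Units.val_mul, ih, add_mul, smul_mul_assoc, smul_mul_assoc, u.mul_inv,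
      one_mul, hinv, psi_add_one A (-m), sub_add_cancel]
    module

theorem units_zpow_mul_add_eq_sum (hu : (u + u⁻¹ : R) = A) (n : ℕ) (k r : ℤ) :
    ((u ^ (n * k + r) : Rˣ) : R) =
      ∑ i ∈ Finset.range (n + 1),
        (n.choose i * (psi A (k + 1) - A * psi A k) ^ (n - i) * psi A k ^ i) •
          ((u ^ (r + i) : Rˣ) : R) := by
  have hcomm : Commute (psi A k • (u : R)) ((psi A (k + 1) - A * psi A k) • (1 : R)) :=
    (Commute.one_right _).smul_right _
  rw [zpow_add, mul_comm (n : ℤ), zpow_mul, zpow_natCast, Units.val_mul, Units.val_pow_eq_pow_val,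
    units_zpow_eq_psi_smul_add hu k, hcomm.add_pow, Finset.sum_mul]
  refine Finset.sum_congr rfl fun i _ ↦ ?_
  rw [add_comm r, zpow_add, zpow_natCast, Units.val_mul, Units.val_pow_eq_pow_val, smul_pow,
    smul_pow, one_pow, mul_smul_one, ← Nat.cast_comm, ← nsmul_eq_mul]
  simp only [smul_mul_assoc]
  module

end Units

/-- The generator `ω` of `ℤ[ω] / (ω² - Aω + 1)` as a unit, with inverse `A - ω`; the
`ω`-coordinates of its powers are the sequence `ψ`. -/
def omegaUnit (A : ℤ) : (QuadraticAlgebra ℤ (-1) A)ˣ where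
  val := ω
  inv := (A : QuadraticAlgebra ℤ (-1) A) - ω
  val_inv := by ext <;> simp
  inv_val := by ext <;> simp

theorem omegaUnit_add_inv (A : ℤ) :
    (omegaUnit A + (omegaUnit A)⁻¹ : QuadraticAlgebra ℤ (-1) A) = A :=
  add_sub_cancel ω (A : QuadraticAlgebra ℤ (-1) A)

theorem im_omegaUnit_zpow (A m : ℤ) :
    ((omegaUnit A ^ m : (QuadraticAlgebra ℤ (-1) A)ˣ) : QuadraticAlgebra ℤ (-1) A).im =
      psi A m := by
  rw [units_zpow_eq_psi_smul_add (omegaUnit_add_inv A)]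
  simp [omegaUnit]

theorem psi_linear_expansion_general (A : ℤ) (n : ℕ) (k r : ℤ) :
    psi A (n * k + r) =
      ∑ i ∈ Finset.range (n + 1),
        n.choose i * (psi A (k + 1) - A * psi A k) ^ (n - i) * psi A k ^ i * psi A (r + i) := by
  rw [← im_omegaUnit_zpow, units_zpow_mul_add_eq_sum (omegaUnit_add_inv A), ← imₗ_apply, map_sum]
  simp only [imₗ_apply, im_smul, im_omegaUnit_zpow, smul_eq_mul]

/-- For `n, k, r ≥ 0`:
`ψ_{nk+r}(A) = ∑_{i=0}^n C(n,i)·(ψ_{k+1}(A) − A·ψ_k(A))^{n−i}·ψ_k(A)^i·ψ_{r+i}(A)`. -/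
theorem psi_linear_expansion (A : ℤ) (n k r : ℕ) :
    psi A ((n * k + r : ℕ) : ℤ) =
      ∑ i ∈ Finset.range (n + 1),
        (n.choose i : ℤ) * (psi A ((k + 1 : ℕ) : ℤ) - A * psi A (k : ℤ)) ^ (n - i) *
          (psi A (k : ℤ)) ^ i * psi A ((r + i : ℕ) : ℤ) := by
  exact_mod_cast psi_linear_expansion_general A n k r
end
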